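/- For a positive integer k, real numbers x, y, and an integer m, the torus coherent state is ξ^k_{(x,y)}(m) = (2/k)^(1/4) · e^{i k x y/(4π)} · ∑_{p ∈ ℤ} exp(−(k/(4π))·(2πm/k − 2πp − x)²) · exp(i·(k/(2π))·y·(2πm/k − 2πp − x)); the series converges absolutely. Then for every fixed pair of real numbers (x, y), the limit as k → ∞ (over positive integers) of ∑_{m=0}^{k−1} |ξ^k_{(x,y)}(m)|² equals 1. -/

import Mathlib

open Real Filter

/-- The `p`-th term of the periodized-Gaussian series defining the torus coherent state
`ξ^k_{(x,y)}(m)`. -/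
noncomputable def xiTerm (k : ℕ) (x y : ℝ) (m : ℤ) (p : ℤ) : ℂ :=
  ((Real.exp (-((k : ℝ) / (4 * π)) * (2 * π * (m : ℝ) / (k : ℝ) - 2 * π * (p : ℝ) - x) ^ 2) : ℝ) : ℂ) *
    Complex.exp (Complex.I *
      ((((k : ℝ) / (2 * π)) * y * (2 * π * (m : ℝ) / (k : ℝ) - 2 * π * (p : ℝ) - x) : ℝ) : ℂ))

/-- The torus coherent state
`ξ^k_{(x,y)}(m) = (2/k)^(1/4) · e^{ikxy/(4π)} · ∑_{p∈ℤ} e^{−(k/(4π))(2πm/k − 2πp − x)²}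
· e^{i(k/(2π))y(2πm/k − 2πp − x)}`. -/
noncomputable def xi (k : ℕ) (x y : ℝ) (m : ℤ) : ℂ :=
  (((2 / (k : ℝ)) ^ ((1 : ℝ) / 4) : ℝ) : ℂ) *
    Complex.exp (Complex.I * (((k : ℝ) * x * y / (4 * π) : ℝ) : ℂ)) *
    ∑' p : ℤ, xiTerm k x y m p

/-!
For any summable `f : ℤ → ℂ`, the squared norm over one period of its `k`-periodization is the sum
over `d` of the autocorrelations of `f` at the shifts `k * d`. For a Gaussian wave packet, each
autocorrelation is an explicit factor, of size `exp (-π k d² / 2)` for the packet in the coherent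
state, times a shifted Gaussian sum over `ℤ`, which Poisson summation turns into a cosine theta
series `HurwitzZeta.cosKernel a (k / 2)`. Since `|cosKernel a t - 1| ≤ θ t - 1` with
`θ = cosKernel 0`, the total differs from the leading term `1` by at most `θ (k / 2) ^ 2 - 1`,
which tends to `0`.
-/

open scoped RealInnerProductSpace
open HurwitzZeta

section CosKernel

lemma abs_cosKernel_sub_one_le (a : UnitAddCircle) {t : ℝ} (ht : 0 < t) :
    |cosKernel a t - 1| ≤ cosKernel 0 t - 1 := by
  induction a using QuotientAddGroup.induction_on with | H a =>
  have hbound : HasSum (fun n : ℤ => if n = 0 then 0 else exp (-π * n ^ 2 * t))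
      (cosKernel 0 t - 1) := by
    simpa [evenKernel_eq_cosKernel_of_zero] using hasSum_int_evenKernel₀ 0 ht
  rw [← Real.norm_eq_abs, ← Complex.norm_real, Complex.ofReal_sub, Complex.ofReal_one]
  refine (hasSum_int_cosKernel₀ a ht).norm_le_of_bounded hbound fun n => ?_
  split_ifs
  · exact norm_zero.le
  · have hphase : 2 * π * Complex.I * a * n = ((2 * π * a * n : ℝ) : ℂ) * Complex.I := by
      push_cast
      ring
    rw [norm_mul, hphase, Complex.norm_exp_ofReal_mul_I, one_mul, Complex.norm_real,
      Real.norm_of_nonneg (exp_pos _).le]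

lemma abs_cosKernel_le (a : UnitAddCircle) {t : ℝ} (ht : 0 < t) :
    |cosKernel a t| ≤ cosKernel 0 t := by
  have h := abs_le.1 (abs_cosKernel_sub_one_le a ht)
  exact abs_le.2 ⟨by linarith, by linarith⟩

lemma tendsto_cosKernel_atTop (a : UnitAddCircle) :
    Tendsto (cosKernel a) atTop (nhds 1) := by
  obtain ⟨p, hp, hO⟩ := isBigO_atTop_cosKernel_sub a
  have hexp : Tendsto (fun t => exp (-p * t)) atTop (nhds 0) :=
    tendsto_exp_atBot.comp (tendsto_id.const_mul_atTop_of_neg (neg_lt_zero.2 hp))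
  exact tendsto_sub_nhds_zero_iff.1 (hO.trans_tendsto hexp)

lemma sqrt_mul_evenKernel (a : UnitAddCircle) {t : ℝ} (ht : 0 < t) :
    √t * evenKernel a t = cosKernel a (1 / t) := by
  rw [evenKernel_functional_equation, ← sqrt_eq_rpow, ← mul_assoc,
    mul_one_div_cancel (sqrt_pos.2 ht).ne', one_mul]

end CosKernel

section Periodization

/-- The `k`-periodic function on `ℤ` obtained by summing the translates of `f` by the multiples
of `k`; the value is `0` where this series diverges. -/
noncomputable def periodization {E : Type*} [AddCommMonoid E] [TopologicalSpace E]
    (k : ℕ) (f : ℤ → E) (m : ℤ) : E :=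
  ∑' p : ℤ, f (m - k * p)

lemma periodization_sub_mul {E : Type*} [AddCommMonoid E] [TopologicalSpace E]
    (k : ℕ) (f : ℤ → E) (m p : ℤ) :
    periodization k f (m - k * p) = periodization k f m := by
  rw [periodization, periodization, ← (Equiv.addLeft p).tsum_eq fun q => f (m - k * q)]
  simp only [Equiv.coe_addLeft, mul_add, sub_sub]

lemma injective_sub_natCast_mul (k : ℕ) [NeZero k] (m : ℤ) :
    Function.Injective fun p : ℤ => m - k * p :=
  sub_right_injective.comp (mul_right_injective₀ (NeZero.ne (k : ℤ)))

lemma sum_range_periodization {E : Type*} [AddCommGroup E] [UniformSpace E] [IsUniformAddGroup E]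
    [CompleteSpace E] [T0Space E] (k : ℕ) [NeZero k] {f : ℤ → E} (hf : Summable f) :
    ∑ m ∈ Finset.range k, periodization k f m = ∑' n, f n := by
  let e : Fin k × ℤ ≃ ℤ :=
    ((Equiv.refl _).prodCongr (Equiv.neg ℤ)).trans
      ((Equiv.prodComm _ _).trans (Int.divModEquiv k).symm)
  have he (m : Fin k) (p : ℤ) : e (m, p) = m - k * p := by
    simp only [e, Equiv.trans_apply, Equiv.prodCongr_apply, Prod.map_apply, Equiv.refl_apply,
      Equiv.neg_apply, Equiv.prodComm_apply, Prod.swap_prod_mk, Int.divModEquiv_symm_apply]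
    ring
  have hfe : Summable fun c => f (e c) := e.summable_iff.2 hf
  rw [← e.tsum_eq f, hfe.tsum_prod, tsum_fintype, Finset.sum_range]
  simp only [he, periodization]

variable {E : Type*} [NormedAddCommGroup E] [InnerProductSpace ℝ E]

/-- The autocorrelation of `f : ℤ → E` at the shift `c`, for the real inner product of `E`; on `ℂ`
this is the real part of the usual Hermitian autocorrelation. -/
noncomputable def autocorrelation (f : ℤ → E) (c : ℤ) : ℝ :=
  ∑' n : ℤ, ⟪f n, f (n - c)⟫

lemma summable_inner_sub_mul (k : ℕ) [NeZero k] {f : ℤ → E} (hf : Summable fun n => ‖f n‖) :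
    Summable fun q : ℤ × ℤ => ⟪f q.1, f (q.1 - k * q.2)⟫ := by
  have hinj : Function.Injective fun q : ℤ × ℤ => (q.1, q.1 - k * q.2) := by
    rintro ⟨n, d⟩ ⟨n', d'⟩ h
    obtain ⟨rfl, hd⟩ := Prod.mk.inj h
    exact congrArg (Prod.mk n) (injective_sub_natCast_mul k n hd)
  have hprod := hf.mul_of_nonneg hf (fun _ => norm_nonneg _) fun _ => norm_nonneg _
  exact (hprod.comp_injective hinj).of_norm_bounded fun q => norm_inner_le_norm _ _

lemma hasSum_autocorrelation_mul [CompleteSpace E] (k : ℕ) [NeZero k] {f : ℤ → E}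
    (hf : Summable fun n => ‖f n‖) :
    HasSum (fun d : ℤ => autocorrelation f (k * d))
      (∑ m ∈ Finset.range k, ‖periodization k f m‖ ^ 2) := by
  have hshift (m : ℤ) : Summable fun p : ℤ => f (m - k * p) :=
    (hf.comp_injective (injective_sub_natCast_mul k m)).of_norm
  have hpairs := summable_inner_sub_mul k hf
  have hinner (n : ℤ) : ∑' d : ℤ, ⟪f n, f (n - k * d)⟫ = ⟪f n, periodization k f n⟫ :=
    ((innerSL ℝ (f n)).map_tsum (hshift n)).symm
  have hsum : Summable fun n => ⟪f n, periodization k f n⟫ := by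
    simpa only [hinner] using hpairs.prod
  have hnorm (m : ℤ) : ‖periodization k f m‖ ^ 2 =
      periodization k (fun n => ⟪f n, periodization k f n⟫) m :=
    calc ‖periodization k f m‖ ^ 2 = ⟪∑' p : ℤ, f (m - k * p), periodization k f m⟫ :=
          (real_inner_self_eq_norm_sq _).symm
      _ = ∑' p : ℤ, ⟪f (m - k * p), periodization k f m⟫ :=
          (innerSLFlip ℝ (periodization k f m)).map_tsum (hshift m)
      _ = ∑' p : ℤ, ⟪f (m - k * p), periodization k f (m - k * p)⟫ := by
          simp only [periodization_sub_mul]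
  have htotal : ∑ m ∈ Finset.range k, ‖periodization k f m‖ ^ 2 =
      ∑' d, autocorrelation f (k * d) :=
    calc ∑ m ∈ Finset.range k, ‖periodization k f m‖ ^ 2
      _ = ∑' n, ⟪f n, periodization k f n⟫ := by
          simp only [hnorm, sum_range_periodization k hsum]
      _ = ∑' n, ∑' d : ℤ, ⟪f n, f (n - k * d)⟫ := by simp only [hinner]
      _ = ∑' d, autocorrelation f (k * d) := hpairs.prod_symm.tsum_comm
  rw [htotal]
  exact hpairs.prod_symm.prod.hasSum

end Periodization

section WavePacket

/-- The Gaussian wave packet on `ℤ` with centre `u`, frequency `y` and width of order `1 / √t`. -/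
noncomputable def wavePacket (t u y : ℝ) (n : ℤ) : ℂ :=
  (exp (-π * (n - u) ^ 2 * t) : ℝ) * Complex.exp ((y * (n - u) : ℝ) * Complex.I)

lemma norm_wavePacket (t u y : ℝ) (n : ℤ) :
    ‖wavePacket t u y n‖ = exp (-π * (n - u) ^ 2 * t) := by
  rw [wavePacket, norm_mul, Complex.norm_exp_ofReal_mul_I, mul_one, Complex.norm_real,
    Real.norm_of_nonneg (exp_pos _).le]

lemma summable_norm_wavePacket {t : ℝ} (ht : 0 < t) (u y : ℝ) :
    Summable fun n => ‖wavePacket t u y n‖ := by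
  simpa only [norm_wavePacket, ← sub_eq_add_neg] using (hasSum_int_evenKernel (-u) ht).summable

lemma inner_ofReal_mul_exp_mul_I (r s α β : ℝ) :
    ⟪(r : ℂ) * Complex.exp (α * Complex.I), s * Complex.exp (β * Complex.I)⟫ =
      r * s * cos (α - β) := by
  simp only [Complex.inner, map_mul, Complex.conj_ofReal, Complex.mul_re, Complex.mul_im,
    Complex.conj_re, Complex.conj_im, Complex.exp_ofReal_mul_I_re, Complex.exp_ofReal_mul_I_im,
    Complex.ofReal_re, Complex.ofReal_im, cos_sub]
  ring

lemma inner_wavePacket_sub (t u y : ℝ) (n c : ℤ) :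
    ⟪wavePacket t u y n, wavePacket t u y (n - c)⟫ =
      cos (y * c) * exp (-π * c ^ 2 * (t / 2)) * exp (-π * (n + -(u + c / 2)) ^ 2 * (2 * t)) := by
  -- The parallelogram law `p ^ 2 + (p - c) ^ 2 = c ^ 2 / 2 + 2 * (p - c / 2) ^ 2` at `p = n - u`.
  have hexponent : -π * (n - u) ^ 2 * t + -π * ((n - c : ℤ) - u) ^ 2 * t =
      -π * c ^ 2 * (t / 2) + -π * (n + -(u + c / 2)) ^ 2 * (2 * t) := by
    push_cast
    ring
  have hphase : y * (n - u) - y * ((n - c : ℤ) - u) = y * c := by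
    push_cast
    ring
  rw [wavePacket, wavePacket, inner_ofReal_mul_exp_mul_I, ← exp_add, hexponent, hphase, exp_add]
  ring

lemma sqrt_mul_autocorrelation_wavePacket {t : ℝ} (ht : 0 < t) (u y : ℝ) (c : ℤ) :
    √(2 * t) * autocorrelation (wavePacket t u y) c =
      cos (y * c) * exp (-π * c ^ 2 * (t / 2)) * cosKernel ↑(u + c / 2) (1 / (2 * t)) := by
  have h2t : 0 < 2 * t := by positivity
  have hsum := (hasSum_int_evenKernel (-(u + c / 2)) h2t).tsum_eq
  simp only [autocorrelation, inner_wavePacket_sub]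
  rw [tsum_mul_left, hsum, AddCircle.coe_neg, evenKernel_neg, mul_left_comm,
    sqrt_mul_evenKernel _ h2t]

lemma abs_sqrt_mul_autocorrelation_wavePacket_sub_ite_le {t : ℝ} (ht : 0 < t) (u y : ℝ) (c : ℤ) :
    |√(2 * t) * autocorrelation (wavePacket t u y) c - if c = 0 then 1 else 0| ≤
      exp (-π * c ^ 2 * (t / 2)) * cosKernel 0 (1 / (2 * t)) - if c = 0 then 1 else 0 := by
  have hs : 0 < 1 / (2 * t) := by positivity
  rw [sqrt_mul_autocorrelation_wavePacket ht]
  split_ifs with hc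
  · simpa [hc] using abs_cosKernel_sub_one_le (u : UnitAddCircle) hs
  · rw [sub_zero, sub_zero, abs_mul, abs_mul, abs_of_pos (exp_pos _)]
    exact mul_le_mul (mul_le_of_le_one_left (exp_pos _).le (abs_cos_le_one _))
      (abs_cosKernel_le _ hs) (abs_nonneg _) (exp_pos _).le

lemma abs_sqrt_mul_sum_norm_sq_periodization_wavePacket_sub_one_le (k : ℕ) [NeZero k] {t : ℝ}
    (ht : 0 < t) (u y : ℝ) :
    |√(2 * t) * ∑ m ∈ Finset.range k, ‖periodization k (wavePacket t u y) m‖ ^ 2 - 1| ≤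
      cosKernel 0 (k ^ 2 * t / 2) * cosKernel 0 (1 / (2 * t)) - 1 := by
  have hk : 0 < (k : ℝ) := Nat.cast_pos.2 (NeZero.pos k)
  have hone : HasSum (fun d : ℤ => if d = 0 then (1 : ℝ) else 0) 1 := hasSum_ite_eq 0 1
  have hgauss : HasSum (fun d : ℤ => exp (-π * (k * d : ℤ) ^ 2 * (t / 2)))
      (cosKernel 0 (k ^ 2 * t / 2)) := by
    have hexponent (d : ℤ) : -π * (k * d : ℤ) ^ 2 * (t / 2) =
        -π * ((d : ℝ) + 0) ^ 2 * (k ^ 2 * t / 2) := by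
      push_cast
      ring
    simp only [← evenKernel_eq_cosKernel_of_zero, hexponent]
    exact hasSum_int_evenKernel 0 (by positivity)
  have hcorr := (hasSum_autocorrelation_mul k (summable_norm_wavePacket ht u y)).mul_left √(2 * t)
  refine (hcorr.sub hone).norm_le_of_bounded ((hgauss.mul_right _).sub hone) fun d => ?_
  simpa only [Real.norm_eq_abs, mul_eq_zero, Nat.cast_eq_zero, NeZero.ne k, false_or] using
    abs_sqrt_mul_autocorrelation_wavePacket_sub_ite_le ht u y (k * d)

end WavePacket

section CoherentState

variable (k : ℕ) [NeZero k] (x y : ℝ)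

lemma xiTerm_eq_wavePacket (m p : ℤ) :
    xiTerm k x y m p = wavePacket (k : ℝ)⁻¹ (k * x / (2 * π)) y (m - k * p) := by
  have hk : (k : ℝ) ≠ 0 := NeZero.ne _
  have hexponent : -((k : ℝ) / (4 * π)) * (2 * π * m / k - 2 * π * p - x) ^ 2 =
      -π * ((m - k * p : ℤ) - k * x / (2 * π)) ^ 2 * (k : ℝ)⁻¹ := by
    push_cast
    field_simp
    ring
  have hphase : (k : ℝ) / (2 * π) * y * (2 * π * m / k - 2 * π * p - x) =
      y * ((m - k * p : ℤ) - k * x / (2 * π)) := by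
    push_cast
    field_simp
  rw [xiTerm, wavePacket, hexponent, hphase, mul_comm Complex.I]

lemma summable_norm_xiTerm (m : ℤ) : Summable fun p : ℤ => ‖xiTerm k x y m p‖ := by
  have hk : 0 < (k : ℝ)⁻¹ := inv_pos.2 (Nat.cast_pos.2 (NeZero.pos k))
  simp only [xiTerm_eq_wavePacket]
  exact (summable_norm_wavePacket hk _ y).comp_injective (injective_sub_natCast_mul k m)

lemma norm_xi_sq (m : ℤ) :
    ‖xi k x y m‖ ^ 2 =
      √(2 * (k : ℝ)⁻¹) * ‖periodization k (wavePacket (k : ℝ)⁻¹ (k * x / (2 * π)) y) m‖ ^ 2 := by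
  have hroot : ((2 / (k : ℝ)) ^ ((1 : ℝ) / 4)) ^ 2 = √(2 * (k : ℝ)⁻¹) := by
    rw [← rpow_natCast, ← rpow_mul (by positivity), sqrt_eq_rpow, div_eq_mul_inv]
    norm_num
  simp only [xi, xiTerm_eq_wavePacket]
  rw [norm_mul, norm_mul, mul_comm Complex.I, Complex.norm_exp_ofReal_mul_I, mul_one,
    Complex.norm_real, Real.norm_of_nonneg (by positivity), mul_pow, hroot, periodization]

lemma abs_sum_norm_xi_sq_sub_one_le :
    |∑ m ∈ Finset.range k, ‖xi k x y m‖ ^ 2 - 1| ≤ cosKernel 0 (k / 2) ^ 2 - 1 := by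
  have hk : 0 < (k : ℝ) := Nat.cast_pos.2 (NeZero.pos k)
  have hbound := abs_sqrt_mul_sum_norm_sq_periodization_wavePacket_sub_one_le k (inv_pos.2 hk)
    (k * x / (2 * π)) y
  have hfirst : (k : ℝ) ^ 2 * (k : ℝ)⁻¹ / 2 = k / 2 := by field_simp
  have hsecond : 1 / (2 * (k : ℝ)⁻¹) = k / 2 := by field_simp
  rw [hfirst, hsecond, ← sq] at hbound
  simpa only [norm_xi_sq, ← Finset.mul_sum] using hbound

end CoherentState

theorem xi_norm_tendsto_one_general :
    (∀ k : ℕ, 0 < k → ∀ (x y : ℝ) (m : ℤ), Summable fun p : ℤ => ‖xiTerm k x y m p‖) ∧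
    TendstoUniformly (fun (k : ℕ) (z : ℝ × ℝ) =>
      ∑ m ∈ Finset.range k, ‖xi k z.1 z.2 (m : ℤ)‖ ^ 2) (fun _ => 1) atTop := by
  refine ⟨fun k hk x y m => ?_, Metric.tendstoUniformly_iff.2 fun ε hε => ?_⟩
  · have : NeZero k := ⟨hk.ne'⟩
    exact summable_norm_xiTerm k x y m
  · have hlim : Tendsto (fun k : ℕ => cosKernel 0 (k / 2) ^ 2 - 1) atTop (nhds 0) := by
      have hhalf : Tendsto (fun k : ℕ => (k : ℝ) / 2) atTop atTop :=
        tendsto_natCast_atTop_atTop.atTop_div_const two_pos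
      simpa using (((tendsto_cosKernel_atTop 0).comp hhalf).pow 2).sub_const 1
    filter_upwards [eventually_gt_atTop 0, hlim.eventually_lt_const hε] with k hk hkε z
    have : NeZero k := ⟨hk.ne'⟩
    rw [dist_comm, Real.dist_eq]
    exact (abs_sum_norm_xi_sq_sub_one_le k z.1 z.2).trans_lt hkε

/-- The series defining `ξ^k_{(x,y)}` converges absolutely and, for every fixed `(x,y)`, the
torus coherent state becomes normalized in the large-`k` limit:
`∑_{m=0}^{k−1} |ξ^k_{(x,y)}(m)|² → 1` as `k → ∞` over positive integers. -/
theorem xi_norm_tendsto_one (x y : ℝ) :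
    (∀ k : ℕ, 0 < k → ∀ m : ℤ, Summable fun p : ℤ => ‖xiTerm k x y m p‖) ∧
    Tendsto (fun k : ℕ => ∑ m ∈ Finset.range k, ‖xi k x y (m : ℤ)‖ ^ 2)
      atTop (nhds 1) := by
  exact ⟨fun k hk => xi_norm_tendsto_one_general.1 k hk x y,
    xi_norm_tendsto_one_general.2.tendsto_at (x, y)⟩
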